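/- arXiv:1211.6884 — 6 statements merged into one kernel-verified Lean document; each statement's English description precedes it below -/
import Mathlib

section
/- Let W be a Weyl candidate on 4-dimensional Minkowski space and T its Bel–Robinson tensor. Then T is totally symmetric in its four indices (T a b c d is invariant under every permutation of (a,b,c,d)) and trace-free: ∑_{a,b} η a b · T a b c d = 0 for all c, d. -/
/-!
A Weyl candidate is determined by its electric part `E_{ij} = W_{0i0j}` and magnetic part
`B_{il} = ½ ε_{jkl} W_{0ijk}`, two symmetric trace-free `3 × 3` arrays, and conversely
`W = weylOf E B` (`IsWeylCandidate.exists_eq_weylOf`). In these ten free parameters every component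
of the Bel–Robinson tensor is an explicit quadratic polynomial.

The symmetries `T_{abcd} = T_{bacd} = T_{abdc}` can be read off the definition, and
`T_{abcd} = T_{cdab}` follows from the pair symmetry of `W`. The remaining adjacent transposition
`T_{abcd} = T_{acbd}` is special to dimension four. By the previous symmetries the difference
`T_{abcd} - T_{acbd}` is antisymmetric in `a, d` and in `b, c`, so only `a < d`, `b < c` have to be
compared, as polynomials in `E` and `B` (`swap_mid`). Adjacent transpositions generate
the symmetric group. Trace-freeness is another polynomial identity in `E` and `B`.
-/

/-- The Minkowski metric `η` on `Fin 4`: `η 0 0 = -1`, `η a a = 1` for `a ≠ 0`,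
and `η a b = 0` for `a ≠ b`. -/
def eta (a b : Fin 4) : ℝ := if a = b then (if a = 0 then -1 else 1) else 0

/-- A Weyl candidate on 4-dimensional Minkowski space. -/
def IsWeylCandidate (W : Fin 4 → Fin 4 → Fin 4 → Fin 4 → ℝ) : Prop :=
  (∀ a b c d, W a b c d = - W b a c d) ∧
  (∀ a b c d, W a b c d = - W a b d c) ∧
  (∀ a b c d, W a b c d = W c d a b) ∧
  (∀ a b c d, W a b c d + W a c d b + W a d b c = 0) ∧
  (∀ b c, ∑ p : Fin 4, ∑ q : Fin 4, eta p q * W p b q c = 0)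

/-- The Bel–Robinson tensor of a Weyl candidate `W`. -/
noncomputable def belRobinson (W : Fin 4 → Fin 4 → Fin 4 → Fin 4 → ℝ) (a b c d : Fin 4) : ℝ :=
  (∑ p : Fin 4, ∑ q : Fin 4, ∑ m : Fin 4, ∑ n : Fin 4,
      eta p q * eta m n * (W a p d m * W b q c n + W a m c p * W b n d q))
  - (1/8) * eta a b * eta c d *
      (∑ m : Fin 4, ∑ n : Fin 4, ∑ p : Fin 4, ∑ l : Fin 4, W m n p l *
        (∑ m' : Fin 4, ∑ n' : Fin 4, ∑ p' : Fin 4, ∑ l' : Fin 4,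
          eta m m' * eta n n' * eta p p' * eta l l' * W m' n' p' l'))

theorem eta_comm (a b : Fin 4) : eta a b = eta b a := by
  unfold eta
  split_ifs <;> simp_all

/-- The antisymmetric `4 × 4` array with time-space part `u` and space-space part dual to `v`:
`biv u v 0 i = u i` and `biv u v j k = ε_{jkl} v l`. -/
def biv (u v : Fin 3 → ℝ) : Fin 4 → Fin 4 → ℝ :=
  ![![0, u 0, u 1, u 2],
    ![-u 0, 0, v 2, -v 1],
    ![-u 1, -v 2, 0, v 0],
    ![-u 2, v 1, -v 0, 0]]

/-- The Weyl tensor with electric part `E` and magnetic part `B`: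
`W_{0i0j} = E_{ij}`, `W_{0ijk} = ε_{jkl} B_{il}`, `W_{ijkl} = -ε_{ijm} ε_{kln} E_{mn}`. -/
def weylOf (E B : Fin 3 → Fin 3 → ℝ) (a b c d : Fin 4) : ℝ :=
  biv (fun i => biv (E i) (B i) c d) (fun i => biv (B i) (fun j => -E i j) c d) a b

/-- Symmetric and trace-free `3 × 3` arrays, with the dependent entries solved for. -/
def IsSTF (E : Fin 3 → Fin 3 → ℝ) : Prop :=
  E 1 0 = E 0 1 ∧ E 2 0 = E 0 2 ∧ E 2 1 = E 1 2 ∧ E 2 2 = -E 0 0 - E 1 1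

theorem eq_biv (A : Fin 4 → Fin 4 → ℝ) (hA : ∀ a b, A a b = -A b a) :
    A = biv ![A 0 1, A 0 2, A 0 3] ![A 2 3, A 3 1, A 1 2] := by
  have h0 : ∀ a, A a a = 0 := fun a => by linarith [hA a a]
  funext a b
  fin_cases a <;> fin_cases b <;> simp [biv, h0] <;> exact hA _ _

/-- Electric-magnetic decomposition: the symmetries of a Weyl candidate leave only the
symmetric trace-free arrays `E_{ij} = W_{0i0j}` and `B_{il} = ½ ε_{jkl} W_{0ijk}`. -/
theorem IsWeylCandidate.exists_eq_weylOf {W : Fin 4 → Fin 4 → Fin 4 → Fin 4 → ℝ}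
    (hW : IsWeylCandidate W) : ∃ E B, IsSTF E ∧ IsSTF B ∧ W = weylOf E B := by
  obtain ⟨h1, h2, h3, h4, h5⟩ := hW
  have h0 : ∀ a c d, W a a c d = 0 := fun a c d => by linarith [h1 a a c d]
  have h0' : ∀ a c d, W c d a a = 0 := fun a c d => by linarith [h2 c d a a]
  have tr : ∀ b c, -W 0 b 0 c + W 1 b 1 c + W 2 b 2 c + W 3 b 3 c = 0 := fun b c => by
    have := h5 b c
    simpa [Fin.sum_univ_four, eta] using this
  have e := fun c d => eq_biv (fun a b => W a b c d) (fun a b => h1 a b c d)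
  have e' := fun a b => eq_biv (fun c d => W a b c d) (fun c d => h2 a b c d)
  let E : Fin 3 → Fin 3 → ℝ := fun i j => W 0 i.succ 0 j.succ
  let B : Fin 3 → Fin 3 → ℝ := fun i => ![W 0 i.succ 2 3, W 0 i.succ 3 1, W 0 i.succ 1 2]
  have t00 := tr 0 0
  have t01 := tr 0 1
  have t02 := tr 0 2
  have t03 := tr 0 3
  have t11 := tr 1 1
  have t12 := tr 1 2
  have t13 := tr 1 3
  have t22 := tr 2 2
  have t23 := tr 2 3
  have t33 := tr 3 3
  simp only [h0, h0', h1 1 0, h1 2 0, h1 3 0, h1 2 1, h1 3 2, h1 1 3, h2 _ _ 1 0, h2 _ _ 2 0,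
    h2 _ _ 3 0, h2 _ _ 2 1, h2 _ _ 3 2, h2 _ _ 1 3] at t00 t01 t02 t03 t11 t12 t13 t22 t23 t33
  have hE : IsSTF E := by
    refine ⟨h3 _ _ _ _, h3 _ _ _ _, h3 _ _ _ _, ?_⟩
    change W 0 3 0 3 = -W 0 1 0 1 - W 0 2 0 2
    linarith
  have hB : IsSTF B := by
    -- The trace of `B` vanishes by the cyclic identity; its symmetry is the `0i` trace condition.
    have b := h4 0 1 2 3
    refine ⟨?_, ?_, ?_, ?_⟩ <;> simp [B] <;> linarith
  refine ⟨E, B, hE, hB, ?_⟩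
  funext a b c d
  -- Each row `W_{0i··}`, `W_{jk··}` is itself antisymmetric, so it suffices to match its six
  -- entries; for `W_{jk··}` this uses the pair symmetry and the spatial trace conditions.
  have hu : ∀ i : Fin 3, W 0 i.succ c d = biv (E i) (B i) c d := fun i => by
    have := congrFun (congrFun (e' 0 i.succ) c) d
    rw [this]
    congr 1
    funext j
    fin_cases j <;> rfl
  have hv : ∀ i : Fin 3, ![W 2 3 c d, W 3 1 c d, W 1 2 c d] i
      = biv (B i) (fun j => -E i j) c d := fun i => by
    fin_cases i
    · change W 2 3 c d = _
      rw [congrFun (congrFun (e' 2 3) c) d]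
      congr 1 <;> funext j <;> fin_cases j <;> simp [B, E] <;>
        linarith [h3 2 3 0 1, h3 2 3 0 2, h3 2 3 0 3, h3 2 3 3 1, h3 2 3 1 2]
    · change W 3 1 c d = _
      rw [congrFun (congrFun (e' 3 1) c) d]
      congr 1 <;> funext j <;> fin_cases j <;> simp [B, E] <;>
        linarith [h3 3 1 0 1, h3 3 1 0 2, h3 3 1 0 3, h3 3 1 1 2, h3 0 2 0 1]
    · change W 1 2 c d = _
      rw [congrFun (congrFun (e' 1 2) c) d]
      congr 1 <;> funext j <;> fin_cases j <;> simp [B, E] <;>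
        linarith [h3 1 2 0 1, h3 1 2 0 2, h3 1 2 0 3, h3 0 3 0 1, h3 0 3 0 2]
  have := congrFun (congrFun (e c d) a) b
  rw [this]
  unfold weylOf
  congr 1
  · funext i
    rw [← hu]
    fin_cases i <;> rfl
  · funext i
    exact hv i

/-- Since `η` is diagonal, every contraction collapses to a single signed sum. -/
theorem belRobinson_eq (W : Fin 4 → Fin 4 → Fin 4 → Fin 4 → ℝ) (a b c d : Fin 4) :
    belRobinson W a b c d =
      (∑ p : Fin 4, ∑ m : Fin 4,
        eta p p * eta m m * (W a p d m * W b p c m + W a p c m * W b p d m))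
      - (1/8) * eta a b * eta c d * ∑ m : Fin 4, ∑ n : Fin 4, ∑ p : Fin 4, ∑ l : Fin 4,
        eta m m * eta n n * eta p p * eta l l * W m n p l ^ 2 := by
  have he : ∀ (a : Fin 4) (f : Fin 4 → ℝ), ∑ b, eta a b * f b = eta a a * f a := fun a f =>
    Finset.sum_eq_single a (fun b _ hb => by simp [eta, hb.symm]) (by simp)
  unfold belRobinson
  simp only [mul_assoc, ← Finset.mul_sum, he]
  congr 1
  · simp only [mul_add, Finset.sum_add_distrib, Finset.mul_sum]
    congr 1
    rw [Finset.sum_comm]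
    refine Finset.sum_congr rfl fun p _ => Finset.sum_congr rfl fun m _ => ?_
    ring
  · simp only [Finset.mul_sum]
    refine Finset.sum_congr rfl fun m _ => Finset.sum_congr rfl fun n _ =>
      Finset.sum_congr rfl fun p _ => Finset.sum_congr rfl fun l _ => ?_
    ring

theorem belRobinson_swap_left (W : Fin 4 → Fin 4 → Fin 4 → Fin 4 → ℝ) (a b c d : Fin 4) :
    belRobinson W b a c d = belRobinson W a b c d := by
  rw [belRobinson_eq, belRobinson_eq, eta_comm b a]
  congr 1
  refine Finset.sum_congr rfl fun p _ => Finset.sum_congr rfl fun m _ => ?_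
  ring

theorem belRobinson_swap_right (W : Fin 4 → Fin 4 → Fin 4 → Fin 4 → ℝ) (a b c d : Fin 4) :
    belRobinson W a b d c = belRobinson W a b c d := by
  rw [belRobinson_eq, belRobinson_eq, eta_comm d c]
  congr 1
  refine Finset.sum_congr rfl fun p _ => Finset.sum_congr rfl fun m _ => ?_
  ring

theorem belRobinson_swap_pairs {W : Fin 4 → Fin 4 → Fin 4 → Fin 4 → ℝ}
    (hW : ∀ a b c d, W a b c d = W c d a b) (a b c d : Fin 4) :
    belRobinson W c d a b = belRobinson W a b c d := by
  rw [belRobinson_eq, belRobinson_eq, mul_right_comm (1 / 8) (eta c d)]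
  congr 1
  rw [Finset.sum_comm]
  refine Finset.sum_congr rfl fun p _ => Finset.sum_congr rfl fun m _ => ?_
  rw [hW c, hW d, hW c, hW d]
  ring

theorem weylOf_normSq (E B : Fin 3 → Fin 3 → ℝ) :
    ∑ m : Fin 4, ∑ n : Fin 4, ∑ p : Fin 4, ∑ l : Fin 4,
      eta m m * eta n n * eta p p * eta l l * weylOf E B m n p l ^ 2 =
        8 * ∑ i, ∑ j, (E i j ^ 2 - B i j ^ 2) := by
  simp [Fin.sum_univ_four, Fin.sum_univ_three, eta, weylOf, biv]
  ring

set_option maxHeartbeats 4000000 in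
/-- The component computation behind total symmetry, in the 36 cases that remain once the
antisymmetry of `T_{abcd} - T_{acbd}` in `a, d` and in `b, c` is taken into account. -/
theorem swap_mid {E B : Fin 3 → Fin 3 → ℝ} (hE : IsSTF E) (hB : IsSTF B) (a b c d : Fin 4)
    (had : a < d) (hbc : b < c) :
    belRobinson (weylOf E B) a b c d = belRobinson (weylOf E B) a c b d := by
  obtain ⟨e1, e2, e3, e4⟩ := hE
  obtain ⟨b1, b2, b3, b4⟩ := hB
  rw [belRobinson_eq, belRobinson_eq, weylOf_normSq]
  fin_cases a <;> fin_cases d <;> first | (exfalso; revert had; decide) | skip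
  all_goals fin_cases b <;> fin_cases c <;> first | (exfalso; revert hbc; decide) | skip
  all_goals
    simp [Fin.sum_univ_four, Fin.sum_univ_three, eta, weylOf, biv, e1, e2, e3, e4, b1, b2, b3, b4]
  all_goals try ring

theorem belRobinson_swap_mid {W : Fin 4 → Fin 4 → Fin 4 → Fin 4 → ℝ} (hW : IsWeylCandidate W)
    (a b c d : Fin 4) : belRobinson W a c b d = belRobinson W a b c d := by
  have hp := hW.2.2.1
  -- `T_{dbca} = T_{acbd}`: exchanging `a, d` has the same effect as exchanging `b, c`.
  have flip : ∀ a b c d, belRobinson W d b c a = belRobinson W a c b d := fun a b c d => by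
    rw [← belRobinson_swap_pairs hp, belRobinson_swap_left, belRobinson_swap_right]
  obtain ⟨E, B, hE, hB, rfl⟩ := hW.exists_eq_weylOf
  rcases lt_trichotomy a d with had | rfl | had
  · rcases lt_trichotomy b c with hbc | rfl | hbc
    · exact (swap_mid hE hB a b c d had hbc).symm
    · rfl
    · exact swap_mid hE hB a c b d had hbc
  · exact (flip a b c a).symm
  · rw [← flip a b c d, ← flip a c b d]
    rcases lt_trichotomy b c with hbc | rfl | hbc
    · exact swap_mid hE hB d b c a had hbc
    · rfl
    · exact (swap_mid hE hB d c b a had hbc).symm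

set_option maxHeartbeats 4000000 in
theorem belRobinson_trace {W : Fin 4 → Fin 4 → Fin 4 → Fin 4 → ℝ} (hW : IsWeylCandidate W)
    (c d : Fin 4) : ∑ a : Fin 4, ∑ b : Fin 4, eta a b * belRobinson W a b c d = 0 := by
  obtain ⟨E, B, ⟨e1, e2, e3, e4⟩, ⟨b1, b2, b3, b4⟩, rfl⟩ := hW.exists_eq_weylOf
  simp only [belRobinson_eq, weylOf_normSq]
  fin_cases c <;> fin_cases d <;>
    simp [Fin.sum_univ_four, Fin.sum_univ_three, eta, weylOf, biv, e1, e2, e3, e4, b1, b2, b3, b4]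
  all_goals try ring

/-- The Bel–Robinson tensor of a Weyl candidate is totally symmetric in its four
indices and trace-free. -/
theorem stmt_10 (W : Fin 4 → Fin 4 → Fin 4 → Fin 4 → ℝ) (hW : IsWeylCandidate W) :
    (∀ (σ : Equiv.Perm (Fin 4)) (v : Fin 4 → Fin 4),
      belRobinson W (v (σ 0)) (v (σ 1)) (v (σ 2)) (v (σ 3)) =
        belRobinson W (v 0) (v 1) (v 2) (v 3)) ∧
    (∀ c d, ∑ a : Fin 4, ∑ b : Fin 4, eta a b * belRobinson W a b c d = 0) := by
  refine ⟨fun σ => ?_, belRobinson_trace hW⟩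
  have hσ : σ ∈ Submonoid.closure
      (Set.range fun i : Fin 3 => Equiv.swap i.castSucc i.succ) := by
    rw [Equiv.Perm.mclosure_swap_castSucc_succ]
    trivial
  induction hσ using Submonoid.closure_induction with
  | mem σ h =>
    obtain ⟨i, rfl⟩ := h
    intro v
    fin_cases i
    · exact belRobinson_swap_left W _ _ _ _
    · exact belRobinson_swap_mid hW _ _ _ _
    · exact belRobinson_swap_right W _ _ _ _
  | one => exact fun v => rfl
  | mul σ τ _ _ h₁ h₂ => exact fun v => (h₂ (v ∘ σ)).trans (h₁ v)
end

section
/- Let F : Fin 4 → Fin 4 → ℝ be antisymmetric and t its energy-momentum tensor. Then t is symmetric (t a b = t b a), trace-free (∑_{a,b} η a b · t a b = 0), and satisfies the algebraic identity ∑_{c,d} t a c · η c d · t b d = (1/4) · η a b · ∑_{c,d,e,f} η c e · η d f · t c d · t e f for all a, b. -/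
/-- The energy-momentum tensor of an antisymmetric 2-form `F` on Minkowski space. -/
noncomputable def emTensor (F : Fin 4 → Fin 4 → ℝ) (a b : Fin 4) : ℝ :=
  (∑ c : Fin 4, ∑ d : Fin 4, eta c d * F a c * F b d)
  - (1/4) * eta a b *
      (∑ c : Fin 4, ∑ d : Fin 4, ∑ e : Fin 4, ∑ f : Fin 4,
        eta c e * eta d f * F c d * F e f)

/-- Contraction against the diagonal metric `η` written out. -/
lemma sum_eta_mul (g : Fin 4 → Fin 4 → ℝ) :
    ∑ c : Fin 4, ∑ d : Fin 4, eta c d * g c d = - g 0 0 + g 1 1 + g 2 2 + g 3 3 := by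
  simp [eta, Fin.sum_univ_four]

/-- The full double contraction with `η` is the contraction of the two inner contractions. -/
lemma sum_eta_eta_mul (S : Fin 4 → Fin 4 → ℝ) :
    ∑ c : Fin 4, ∑ d : Fin 4, ∑ e : Fin 4, ∑ f : Fin 4, eta c e * eta d f * S c d * S e f
      = ∑ c : Fin 4, ∑ e : Fin 4, eta c e * ∑ d : Fin 4, ∑ f : Fin 4, eta d f * (S c d * S e f) := by
  refine Finset.sum_congr rfl fun c _ => ?_
  rw [Finset.sum_comm]
  refine Finset.sum_congr rfl fun e _ => ?_
  simp only [Finset.mul_sum, mul_assoc]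

/-- The quadratic invariant `F_{cd} F^{cd} = 2 (|B|² - |E|²)`, with `E_i = F 0 i`. -/
lemma sum_sq_of_antisymm {F : Fin 4 → Fin 4 → ℝ} (hanti : ∀ a b, F a b = - F b a) :
    ∑ c : Fin 4, ∑ d : Fin 4, ∑ e : Fin 4, ∑ f : Fin 4, eta c e * eta d f * F c d * F e f
      = 2 * (F 1 2 ^ 2 + F 1 3 ^ 2 + F 2 3 ^ 2 - F 0 1 ^ 2 - F 0 2 ^ 2 - F 0 3 ^ 2) := by
  have hdiag (a : Fin 4) : F a a = 0 := by linarith [hanti a a]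
  rw [sum_eta_eta_mul]
  simp only [sum_eta_mul, hdiag, hanti 1 0, hanti 2 0, hanti 3 0, hanti 2 1, hanti 3 1, hanti 3 2]
  ring

lemma emTensor_eq {F : Fin 4 → Fin 4 → ℝ} (hanti : ∀ a b, F a b = - F b a) (a b : Fin 4) :
    emTensor F a b = - (F a 0 * F b 0) + F a 1 * F b 1 + F a 2 * F b 2 + F a 3 * F b 3
      - eta a b *
        ((F 1 2 ^ 2 + F 1 3 ^ 2 + F 2 3 ^ 2 - F 0 1 ^ 2 - F 0 2 ^ 2 - F 0 3 ^ 2) / 2) := by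
  rw [emTensor, sum_sq_of_antisymm hanti]
  simp only [mul_assoc (eta _ _) (F _ _) (F _ _)]
  rw [sum_eta_mul]
  ring

/-- The Rainich identity with its scalar factor in terms of the invariants of `F`:
with `E_i = F 0 i` and `B` the spatial part, `t_{ac} t_b{}^c` is `η_{ab}` times
`((|B|² - |E|²) / 2)² + (E · B)²`. -/
lemma emTensor_contract {F : Fin 4 → Fin 4 → ℝ} (hanti : ∀ a b, F a b = - F b a) (a b : Fin 4) :
    ∑ c : Fin 4, ∑ d : Fin 4, eta c d * (emTensor F a c * emTensor F b d)
      = eta a b *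
        (((F 1 2 ^ 2 + F 1 3 ^ 2 + F 2 3 ^ 2 - F 0 1 ^ 2 - F 0 2 ^ 2 - F 0 3 ^ 2) / 2) ^ 2
          + (F 0 1 * F 2 3 - F 0 2 * F 1 3 + F 0 3 * F 1 2) ^ 2) := by
  have hdiag (a : Fin 4) : F a a = 0 := by linarith [hanti a a]
  rw [sum_eta_mul]
  simp only [emTensor_eq hanti]
  fin_cases a <;> fin_cases b <;>
    simp [eta, hdiag, hanti 1 0, hanti 2 0, hanti 3 0, hanti 2 1, hanti 3 1, hanti 3 2] <;> ring

/-- The energy-momentum tensor `t` of an antisymmetric 2-form `F` is symmetric,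
trace-free, and satisfies `t_a{}^c t_{bc} = (1/4) η_{ab} t_{cd} t^{cd}`. -/
theorem stmt_14 (F : Fin 4 → Fin 4 → ℝ) (hanti : ∀ a b, F a b = - F b a) :
    (∀ a b, emTensor F a b = emTensor F b a) ∧
    (∑ a : Fin 4, ∑ b : Fin 4, eta a b * emTensor F a b) = 0 ∧
    (∀ a b, (∑ c : Fin 4, ∑ d : Fin 4, emTensor F a c * eta c d * emTensor F b d)
      = (1/4) * eta a b * (∑ c : Fin 4, ∑ d : Fin 4, ∑ e : Fin 4, ∑ f : Fin 4,
          eta c e * eta d f * emTensor F c d * emTensor F e f)) := by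
  refine ⟨fun a b => ?_, ?_, fun a b => ?_⟩
  · have h : eta a b = eta b a := by unfold eta; grind
    rw [emTensor_eq hanti, emTensor_eq hanti, h]
    ring
  · have hdiag (a : Fin 4) : F a a = 0 := by linarith [hanti a a]
    rw [sum_eta_mul]
    simp only [emTensor_eq hanti]
    simp [eta, hdiag, hanti 1 0, hanti 2 0, hanti 3 0, hanti 2 1, hanti 3 1, hanti 3 2]
    ring
  · -- Tracing `emTensor_contract` gives the full contraction as `4` times its scalar factor.
    have hL : ∑ c : Fin 4, ∑ d : Fin 4, emTensor F a c * eta c d * emTensor F b d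
        = ∑ c : Fin 4, ∑ d : Fin 4, eta c d * (emTensor F a c * emTensor F b d) :=
      Finset.sum_congr rfl fun c _ => Finset.sum_congr rfl fun d _ => by ring
    rw [hL, sum_eta_eta_mul]
    simp only [emTensor_contract hanti]
    rw [sum_eta_mul]
    simp only [eta, Fin.isValue, ↓reduceIte, one_ne_zero, Fin.reduceEq]
    ring
end

section
/- Let F : Fin 4 → Fin 4 → ℝ be antisymmetric and t its energy-momentum tensor. If u₁, u₂ : Fin 4 → ℝ are causal future-directed vectors (∑_{a,b} η a b · uᵢ a · uᵢ b ≤ 0 and uᵢ 0 > 0 for i = 1, 2), then ∑_{a,b} t a b · u₁ a · u₂ b ≥ 0. Moreover, for a timelike vector u (∑_{a,b} η a b · u a · u b < 0), ∑_{a,b} t a b · u a · u b = 0 if and only if F a b = 0 for all a, b. -/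
/-- The covector of components `(p, a)` pairs non-negatively with the causal future-directed
vector `(q, b)` as soon as `|a| ≤ p`. -/
theorem causal_pairing_nonneg (p a1 a2 a3 q b1 b2 b3 : ℝ) (hp : 0 ≤ p) (hq : 0 ≤ q)
    (ha : a1 ^ 2 + a2 ^ 2 + a3 ^ 2 ≤ p ^ 2) (hb : b1 ^ 2 + b2 ^ 2 + b3 ^ 2 ≤ q ^ 2) :
    0 ≤ p * q + (a1 * b1 + a2 * b2 + a3 * b3) := by
  have cauchy : (a1 * b1 + a2 * b2 + a3 * b3) ^ 2
      ≤ (a1 ^ 2 + a2 ^ 2 + a3 ^ 2) * (b1 ^ 2 + b2 ^ 2 + b3 ^ 2) := by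
    nlinarith [sq_nonneg (a1 * b2 - a2 * b1), sq_nonneg (a1 * b3 - a3 * b1),
      sq_nonneg (a2 * b3 - a3 * b2)]
  have bound : (a1 ^ 2 + a2 ^ 2 + a3 ^ 2) * (b1 ^ 2 + b2 ^ 2 + b3 ^ 2) ≤ p ^ 2 * q ^ 2 :=
    mul_le_mul ha hb (by positivity) (by positivity)
  have h := abs_le_of_sq_le_sq' (a := a1 * b1 + a2 * b2 + a3 * b3) (b := p * q)
    (by nlinarith) (mul_nonneg hp hq)
  linarith [h.1]

theorem eta_quadratic (u : Fin 4 → ℝ) :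
    (∑ a : Fin 4, ∑ b : Fin 4, eta a b * u a * u b)
      = -(u 0) ^ 2 + (u 1 ^ 2 + u 2 ^ 2 + u 3 ^ 2) := by
  simp [Fin.sum_univ_four, eta]
  ring

/-- `t(u, v)` in terms of `E` and `B`, grouped as the covector `t(u, ·)` applied to `v`: `w = (E² + B²) / 2` is the energy
density and `S = E × B` the Poynting vector, with `t 0 i = S i`. -/
theorem emTensor_contract_s15 (F : Fin 4 → Fin 4 → ℝ) (hanti : ∀ a b, F a b = - F b a)
    (E1 E2 E3 B1 B2 B3 : ℝ) (hE1 : F 0 1 = E1) (hE2 : F 0 2 = E2) (hE3 : F 0 3 = E3)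
    (hB1 : F 2 3 = B1) (hB2 : F 3 1 = B2) (hB3 : F 1 2 = B3) (u v : Fin 4 → ℝ)
    (w S1 S2 S3 : ℝ)
    (hw : w = (E1 ^ 2 + E2 ^ 2 + E3 ^ 2 + B1 ^ 2 + B2 ^ 2 + B3 ^ 2) / 2)
    (hS1 : S1 = (E2 * B3 - E3 * B2)) (hS2 : S2 = (E3 * B1 - E1 * B3))
    (hS3 : S3 = (E1 * B2 - E2 * B1)) :
    (∑ a : Fin 4, ∑ b : Fin 4, emTensor F a b * u a * v b)
      = (w * u 0 + (S1 * u 1 + S2 * u 2 + S3 * u 3)) * v 0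
        + ((w * u 1 + S1 * u 0 - E1 * (E1 * u 1 + E2 * u 2 + E3 * u 3)
              - B1 * (B1 * u 1 + B2 * u 2 + B3 * u 3)) * v 1
          + (w * u 2 + S2 * u 0 - E2 * (E1 * u 1 + E2 * u 2 + E3 * u 3)
              - B2 * (B1 * u 1 + B2 * u 2 + B3 * u 3)) * v 2
          + (w * u 3 + S3 * u 0 - E3 * (E1 * u 1 + E2 * u 2 + E3 * u 3)
              - B3 * (B1 * u 1 + B2 * u 2 + B3 * u 3)) * v 3) := by
  have diag : ∀ a, F a a = 0 := fun a => by linarith [hanti a a]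
  have h10 : F 1 0 = -E1 := by rw [hanti, hE1]
  have h20 : F 2 0 = -E2 := by rw [hanti, hE2]
  have h30 : F 3 0 = -E3 := by rw [hanti, hE3]
  have h32 : F 3 2 = -B1 := by rw [hanti, hB1]
  have h13 : F 1 3 = -B2 := by rw [hanti, hB2]
  have h21 : F 2 1 = -B3 := by rw [hanti, hB3]
  subst hw hS1 hS2 hS3
  simp [Fin.sum_univ_four, emTensor, eta, diag, hE1, hE2, hE3, hB1, hB2, hB3, h10, h20, h30,
    h32, h13, h21]
  ring

/-- A solution of `y • E = x × B`, `y • B = -(x × E)` with `|x| < |y|` vanishes. -/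
theorem field_eq_zero (y x1 x2 x3 E1 E2 E3 B1 B2 B3 : ℝ)
    (hx : x1 ^ 2 + x2 ^ 2 + x3 ^ 2 < y ^ 2)
    (e1 : y * E1 - (x2 * B3 - x3 * B2) = 0) (e2 : y * E2 - (x3 * B1 - x1 * B3) = 0)
    (e3 : y * E3 - (x1 * B2 - x2 * B1) = 0) (b1 : y * B1 + (x2 * E3 - x3 * E2) = 0)
    (b2 : y * B2 + (x3 * E1 - x1 * E3) = 0) (b3 : y * B3 + (x1 * E2 - x2 * E1) = 0) :
    (E1 = 0 ∧ E2 = 0 ∧ E3 = 0) ∧ (B1 = 0 ∧ B2 = 0 ∧ B3 = 0) := by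
  -- Both `y² E² = |x × B|² ≤ |x|² B²` and its mirror image hold; their sum forces `E² + B² = 0`.
  have hE : y ^ 2 * (E1 ^ 2 + E2 ^ 2 + E3 ^ 2)
      ≤ (x1 ^ 2 + x2 ^ 2 + x3 ^ 2) * (B1 ^ 2 + B2 ^ 2 + B3 ^ 2) := by
    have h : y ^ 2 * (E1 ^ 2 + E2 ^ 2 + E3 ^ 2)
        = (x2 * B3 - x3 * B2) ^ 2 + (x3 * B1 - x1 * B3) ^ 2 + (x1 * B2 - x2 * B1) ^ 2 := by
      rw [← sub_eq_zero.mp e1, ← sub_eq_zero.mp e2, ← sub_eq_zero.mp e3]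
      ring
    linarith [sq_nonneg (x1 * B1 + x2 * B2 + x3 * B3)]
  have hB : y ^ 2 * (B1 ^ 2 + B2 ^ 2 + B3 ^ 2)
      ≤ (x1 ^ 2 + x2 ^ 2 + x3 ^ 2) * (E1 ^ 2 + E2 ^ 2 + E3 ^ 2) := by
    have h : y ^ 2 * (B1 ^ 2 + B2 ^ 2 + B3 ^ 2)
        = (x2 * E3 - x3 * E2) ^ 2 + (x3 * E1 - x1 * E3) ^ 2 + (x1 * E2 - x2 * E1) ^ 2 := by
      rw [eq_neg_of_add_eq_zero_right b1, eq_neg_of_add_eq_zero_right b2,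
        eq_neg_of_add_eq_zero_right b3]
      ring
    linarith [sq_nonneg (x1 * E1 + x2 * E2 + x3 * E3)]
  have hsum : E1 ^ 2 + E2 ^ 2 + E3 ^ 2 + (B1 ^ 2 + B2 ^ 2 + B3 ^ 2) ≤ 0 := by
    by_contra! hpos
    linarith [mul_pos (sub_pos.mpr hx) hpos]
  refine ⟨⟨?_, ?_, ?_⟩, ?_, ?_, ?_⟩ <;> refine pow_eq_zero_iff two_ne_zero |>.mp ?_ <;>
    linarith [sq_nonneg E1, sq_nonneg E2, sq_nonneg E3, sq_nonneg B1, sq_nonneg B2, sq_nonneg B3]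

/-- The energy-momentum tensor `t` of an antisymmetric 2-form `F` has the dominant
property: contracted with two causal future-directed vectors it is non-negative;
and for a timelike vector `u`, `t(u,u) = 0` if and only if `F = 0`. -/
theorem stmt_15 (F : Fin 4 → Fin 4 → ℝ) (hanti : ∀ a b, F a b = - F b a) :
    (∀ u₁ u₂ : Fin 4 → ℝ,
      ((∑ a : Fin 4, ∑ b : Fin 4, eta a b * u₁ a * u₁ b) ≤ 0 ∧ 0 < u₁ 0) →
      ((∑ a : Fin 4, ∑ b : Fin 4, eta a b * u₂ a * u₂ b) ≤ 0 ∧ 0 < u₂ 0) →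
      0 ≤ ∑ a : Fin 4, ∑ b : Fin 4, emTensor F a b * u₁ a * u₂ b) ∧
    (∀ u : Fin 4 → ℝ, (∑ a : Fin 4, ∑ b : Fin 4, eta a b * u a * u b) < 0 →
      ((∑ a : Fin 4, ∑ b : Fin 4, emTensor F a b * u a * u b) = 0
        ↔ ∀ a b, F a b = 0)) := by
  obtain ⟨E1, hE1⟩ : ∃ x, F 0 1 = x := ⟨_, rfl⟩
  obtain ⟨E2, hE2⟩ : ∃ x, F 0 2 = x := ⟨_, rfl⟩
  obtain ⟨E3, hE3⟩ : ∃ x, F 0 3 = x := ⟨_, rfl⟩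
  obtain ⟨B1, hB1⟩ : ∃ x, F 2 3 = x := ⟨_, rfl⟩
  obtain ⟨B2, hB2⟩ : ∃ x, F 3 1 = x := ⟨_, rfl⟩
  obtain ⟨B3, hB3⟩ : ∃ x, F 1 2 = x := ⟨_, rfl⟩
  have contract := fun u v => emTensor_contract_s15 F hanti E1 E2 E3 B1 B2 B3 hE1 hE2 hE3 hB1 hB2 hB3
    u v _ _ _ _ rfl rfl rfl rfl
  constructor
  · rintro u v ⟨hu, hu0⟩ ⟨hv, hv0⟩
    rw [eta_quadratic] at hu hv
    rw [contract]
    refine causal_pairing_nonneg _ _ _ _ _ _ _ _ ?_ hv0.le ?_ (by linarith)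
    · -- `w² - |E × B|² = (E² - B²)² / 4 + (E·B)²` gives `|E × B| ≤ w`.
      have h := causal_pairing_nonneg
        ((E1 ^ 2 + E2 ^ 2 + E3 ^ 2 + B1 ^ 2 + B2 ^ 2 + B3 ^ 2) / 2)
        (E2 * B3 - E3 * B2) (E3 * B1 - E1 * B3) (E1 * B2 - E2 * B1)
        (u 0) (u 1) (u 2) (u 3) (by positivity) hu0.le
        (by linarith [sq_nonneg (E1 ^ 2 + E2 ^ 2 + E3 ^ 2 - (B1 ^ 2 + B2 ^ 2 + B3 ^ 2)),
              sq_nonneg (E1 * B1 + E2 * B2 + E3 * B3)]) (by linarith)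
      linarith
    · -- The Rainich identity turns causality of `u` into causality of `t(u, ·)`.
      have h : 0 ≤ ((E1 ^ 2 + E2 ^ 2 + E3 ^ 2 - (B1 ^ 2 + B2 ^ 2 + B3 ^ 2)) ^ 2 / 4
          + (E1 * B1 + E2 * B2 + E3 * B3) ^ 2)
            * ((u 0) ^ 2 - (u 1 ^ 2 + u 2 ^ 2 + u 3 ^ 2)) :=
        mul_nonneg (by positivity) (by linarith)
      rw [← sub_nonneg]
      refine h.trans_eq ?_
      ring
  · intro u hu
    rw [eta_quadratic] at hu
    rw [contract]
    constructor
    · intro h0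
      obtain ⟨e1, he1⟩ : ∃ z, u 0 * E1 - (u 2 * B3 - u 3 * B2) = z := ⟨_, rfl⟩
      obtain ⟨e2, he2⟩ : ∃ z, u 0 * E2 - (u 3 * B1 - u 1 * B3) = z := ⟨_, rfl⟩
      obtain ⟨e3, he3⟩ : ∃ z, u 0 * E3 - (u 1 * B2 - u 2 * B1) = z := ⟨_, rfl⟩
      obtain ⟨b1, hb1⟩ : ∃ z, u 0 * B1 + (u 2 * E3 - u 3 * E2) = z := ⟨_, rfl⟩
      obtain ⟨b2, hb2⟩ : ∃ z, u 0 * B2 + (u 3 * E1 - u 1 * E3) = z := ⟨_, rfl⟩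
      obtain ⟨b3, hb3⟩ : ∃ z, u 0 * B3 + (u 1 * E2 - u 2 * E1) = z := ⟨_, rfl⟩
      have key : (u 0) ^ 2 * (e1 ^ 2 + e2 ^ 2 + e3 ^ 2) - (e1 * u 1 + e2 * u 2 + e3 * u 3) ^ 2
          + ((u 0) ^ 2 * (b1 ^ 2 + b2 ^ 2 + b3 ^ 2) - (b1 * u 1 + b2 * u 2 + b3 * u 3) ^ 2)
            = 0 := by
        rw [← he1, ← he2, ← he3, ← hb1, ← hb2, ← hb3]
        linear_combination 2 * (u 0) ^ 2 * h0
      have hsum : e1 ^ 2 + e2 ^ 2 + e3 ^ 2 + (b1 ^ 2 + b2 ^ 2 + b3 ^ 2) ≤ 0 := by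
        by_contra! hpos
        have := mul_pos (show 0 < (u 0) ^ 2 - (u 1 ^ 2 + u 2 ^ 2 + u 3 ^ 2) by linarith) hpos
        -- Lagrange's identity for `|e|²|x|² - (e·x)²` and `|b|²|x|² - (b·x)²`.
        linarith [sq_nonneg (e1 * u 2 - e2 * u 1), sq_nonneg (e1 * u 3 - e3 * u 1),
          sq_nonneg (e2 * u 3 - e3 * u 2), sq_nonneg (b1 * u 2 - b2 * u 1),
          sq_nonneg (b1 * u 3 - b3 * u 1), sq_nonneg (b2 * u 3 - b3 * u 2)]
      have hz : ∀ z : ℝ, z ^ 2 ≤ 0 → z = 0 := fun z hz =>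
        pow_eq_zero_iff two_ne_zero |>.mp (le_antisymm hz (sq_nonneg z))
      have p1 := sq_nonneg e1
      have p2 := sq_nonneg e2
      have p3 := sq_nonneg e3
      have q1 := sq_nonneg b1
      have q2 := sq_nonneg b2
      have q3 := sq_nonneg b3
      obtain ⟨⟨rfl, rfl, rfl⟩, rfl, rfl, rfl⟩ := field_eq_zero (u 0) (u 1) (u 2) (u 3)
        E1 E2 E3 B1 B2 B3 (by linarith)
        (he1.trans (hz _ (by linarith))) (he2.trans (hz _ (by linarith)))
        (he3.trans (hz _ (by linarith))) (hb1.trans (hz _ (by linarith)))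
        (hb2.trans (hz _ (by linarith))) (hb3.trans (hz _ (by linarith)))
      intro a b
      have diag : ∀ a, F a a = 0 := fun a => by linarith [hanti a a]
      fin_cases a <;> fin_cases b <;>
        first
        | exact diag _
        | assumption
        | (rw [hanti, neg_eq_zero]; assumption)
    · intro h
      rw [h] at hE1 hE2 hE3 hB1 hB2 hB3
      subst hE1 hE2 hE3 hB1 hB2 hB3
      ring
end

section
/- Let M > 0 be real. For R > 0 define N(R) := exp(2M/R)·(M − R) + M + R, D(R) := exp(2M/R)·|M − R| − |M − R| + 2M, and q(R) := 1 − (N(R)/D(R))². Then for every R > 0 one has D(R) > 0; moreover q(R) = 0 whenever 0 < R ≤ M, and q(R) > 0 whenever R > M. -/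
/-!
Write `E = exp (2M/R) > 1`, so `D = (E - 1)|M - R| + 2M > 0` and `N = (E - 1)(M - R) + 2M`.
For `R ≤ M` these coincide, hence `q = 0`. For `R > M` one has `D - N = 2(E - 1)(R - M) > 0`
and `D + N = 4M > 0`, so `|N| < D` and `q > 0`.
-/

/-- For the Curzon–Chazy solution with mass `M > 0`, the axis quality factor
`q(R) = 1 - (N(R)/D(R))²` with `N(R) = exp(2M/R)·(M - R) + M + R` and
`D(R) = exp(2M/R)·|M - R| - |M - R| + 2M` satisfies: `D(R) > 0` for all `R > 0`,
`q(R) = 0` for `0 < R ≤ M`, and `q(R) > 0` for `R > M`. -/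
theorem stmt_16 (M : ℝ) (hM : 0 < M) :
    (∀ R : ℝ, 0 < R →
      0 < Real.exp (2*M/R) * |M - R| - |M - R| + 2*M) ∧
    (∀ R : ℝ, 0 < R → R ≤ M →
      1 - ((Real.exp (2*M/R) * (M - R) + M + R) /
           (Real.exp (2*M/R) * |M - R| - |M - R| + 2*M))^2 = 0) ∧
    (∀ R : ℝ, M < R →
      0 < 1 - ((Real.exp (2*M/R) * (M - R) + M + R) /
           (Real.exp (2*M/R) * |M - R| - |M - R| + 2*M))^2) := by
  have hE : ∀ R : ℝ, 0 < R → 1 < Real.exp (2*M/R) := fun R hR =>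
    Real.one_lt_exp_iff.mpr (by positivity)
  have hD : ∀ R : ℝ, 0 < R → 0 < Real.exp (2*M/R) * |M - R| - |M - R| + 2*M := by
    intro R hR
    have h := mul_nonneg (sub_pos.mpr (hE R hR)).le (abs_nonneg (M - R))
    linarith
  refine ⟨hD, fun R hR hRM => ?_, fun R hRM => ?_⟩
  · have hN : Real.exp (2*M/R) * (M - R) + M + R
        = Real.exp (2*M/R) * |M - R| - |M - R| + 2*M := by
      rw [abs_of_nonneg (sub_nonneg.mpr hRM)]
      ring
    rw [hN, div_self (hD R hR).ne']
    norm_num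
  · have hR : 0 < R := hM.trans hRM
    have hpos := hD R hR
    have h := mul_pos (sub_pos.mpr (hE R hR)) (sub_pos.mpr hRM)
    rw [sub_pos, sq_lt_one_iff_abs_lt_one, abs_div, abs_of_pos hpos, div_lt_one hpos,
      abs_of_neg (sub_neg.mpr hRM), abs_lt]
    constructor <;> linarith
end

section
/- Let M > 0 be real and, for R > 0, set q(R) := 1 − ((exp(2M/R)·(M − R) + M + R)/(exp(2M/R)·|M − R| − |M − R| + 2M))². Then q(R) tends to 1 as R tends to +∞ (i.e. q tends to 1 along the filter atTop). -/
open Filter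

/-!
Write `E = exp (2M/R)`. Since `exp` has derivative `1` at `0`, `R (E - 1) → 2M` while `E → 1`.
For `R > M` the numerator is `M (E + 1) - R (E - 1) → 0` and the denominator is
`R (E - 1) - M (E - 1) + 2M → 4M ≠ 0`, so the quotient tends to `0`.
-/

/-- The derivative of `t ↦ exp (c t)` at `0`, read along `t = 1/R`. -/
lemma tendsto_mul_exp_div_sub_one (c : ℝ) :
    Tendsto (fun R : ℝ => R * (Real.exp (c / R) - 1)) atTop (nhds c) := by
  have hd : HasDerivAt (fun t : ℝ => Real.exp (c * t)) c 0 := by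
    simpa using ((hasDerivAt_id (0 : ℝ)).const_mul c).exp
  have h := hd.tendsto_slope_zero_right.comp tendsto_inv_atTop_nhdsGT_zero
  simpa [Function.comp_def, div_eq_mul_inv] using h

/-- For the Curzon–Chazy solution with mass `M > 0`, the axis quality factor
`q(R) = 1 - ((exp(2M/R)·(M - R) + M + R)/(exp(2M/R)·|M - R| - |M - R| + 2M))²`
tends to `1` as `R → +∞`. -/
theorem stmt_17 (M : ℝ) (hM : 0 < M) :
    Tendsto (fun R : ℝ =>
        1 - ((Real.exp (2*M/R) * (M - R) + M + R) /
             (Real.exp (2*M/R) * |M - R| - |M - R| + 2*M))^2)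
      atTop (nhds 1) := by
  have h1 := tendsto_mul_exp_div_sub_one (2 * M)
  have hE : Tendsto (fun R : ℝ => Real.exp (2 * M / R)) atTop (nhds 1) := by
    have h0 : Tendsto (fun R : ℝ => 2 * M / R) atTop (nhds 0) :=
      tendsto_const_nhds.div_atTop tendsto_id
    simpa using h0.rexp
  have hnum := ((hE.add_const 1).const_mul M).sub h1
  have hden := (h1.sub ((hE.sub_const 1).const_mul M)).add_const (2 * M)
  have hne : 2 * M - M * (1 - 1) + 2 * M ≠ 0 := by
    have : 2 * M - M * (1 - 1) + 2 * M = 4 * M := by ring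
    rw [this]
    positivity
  have hq := ((hnum.div hden hne).pow 2).const_sub 1
  have hlim : 1 - ((M * (1 + 1) - 2 * M) / (2 * M - M * (1 - 1) + 2 * M)) ^ 2 = 1 := by
    have : M * (1 + 1) - 2 * M = 0 := by ring
    simp [this]
  rw [hlim] at hq
  refine hq.congr' ?_
  filter_upwards [eventually_gt_atTop M] with R hR
  rw [abs_of_neg (sub_neg.mpr hR)]
  simp only [Pi.div_apply]
  congr 3 <;> ring
end

section
/- Let A, M, R, Q, θ be real numbers such that (A²·cos²θ + R²)·(A²·M²·cos²θ + (Q² − M·R)²) > 0. Then the quantity ϰ := (A²·M·cos²θ + R·(M·R − Q²))² / ((A²·cos²θ + R²)·(A²·M²·cos²θ + (Q² − M·R)²)) satisfies 0 ≤ ϰ ≤ 1; moreover, if Q = 0 then ϰ = 1. -/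
/-- For the Kerr–Newman solution, the quality factor
`ϰ = (A²·M·cos²θ + R·(M·R - Q²))² / ((A²·cos²θ + R²)·(A²·M²·cos²θ + (Q² - M·R)²))`
satisfies `0 ≤ ϰ ≤ 1` whenever the denominator is positive; moreover `ϰ = 1`
when `Q = 0`. -/
theorem stmt_18 (A M R Q θ : ℝ)
    (h : 0 < (A^2 * (Real.cos θ)^2 + R^2) *
      (A^2 * M^2 * (Real.cos θ)^2 + (Q^2 - M*R)^2)) :
    0 ≤ (A^2 * M * (Real.cos θ)^2 + R * (M*R - Q^2))^2 /
        ((A^2 * (Real.cos θ)^2 + R^2) *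
          (A^2 * M^2 * (Real.cos θ)^2 + (Q^2 - M*R)^2)) ∧
    (A^2 * M * (Real.cos θ)^2 + R * (M*R - Q^2))^2 /
        ((A^2 * (Real.cos θ)^2 + R^2) *
          (A^2 * M^2 * (Real.cos θ)^2 + (Q^2 - M*R)^2)) ≤ 1 ∧
    (Q = 0 →
      (A^2 * M * (Real.cos θ)^2 + R * (M*R - Q^2))^2 /
        ((A^2 * (Real.cos θ)^2 + R^2) *
          (A^2 * M^2 * (Real.cos θ)^2 + (Q^2 - M*R)^2)) = 1) := by
  -- Lagrange's identity for the vectors `(A cos θ, R)` and `(A M cos θ, M R - Q²)`, whose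
  -- determinant is `-A Q² cos θ`: the denominator exceeds the numerator by its square.
  have key : (A^2 * (Real.cos θ)^2 + R^2) *
      (A^2 * M^2 * (Real.cos θ)^2 + (Q^2 - M*R)^2) =
      (A^2 * M * (Real.cos θ)^2 + R * (M*R - Q^2))^2 + (A * Real.cos θ * Q^2)^2 := by
    ring
  refine ⟨div_nonneg (sq_nonneg _) h.le, ?_, fun hQ => ?_⟩
  · rw [div_le_one h, key]
    exact le_add_of_nonneg_right (sq_nonneg _)
  · rw [div_eq_one_iff_eq h.ne', key, hQ]
    ring
end
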